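/- Fix an integer d ≥ 2 and a unit vector ψ ∈ ℂ^d. Consider single-call probabilistic protocols (S, S_ch) with d_F = d, together with p ∈ ℝ, satisfying S ⋆ U = p · U̅|ψ⟩⟨ψ|Uᵀ for all U ∈ SU(d) (exact probabilistic unitary complex conjugation on the known pure state ψ). If d > 2, then every such protocol has p = 0. If d = 2, then there exists such a protocol with p = 1, and every such protocol has p ≤ 1; hence the maximal success probability equals 1 for d = 2 and 0 for d > 2. -/

import Mathlib

open Matrix Kronecker BigOperators ComplexOrder

noncomputable section

/-- Entrywise complex conjugate `U̅` of a matrix. -/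
def mconj {d : ℕ} (U : Matrix (Fin d) (Fin d) ℂ) : Matrix (Fin d) (Fin d) ℂ :=
  U.map (starRingEnd ℂ)

/-- Rank-one outer product `|v⟩⟨v|`. -/
def outer {n : Type*} (v : n → ℂ) : Matrix n n ℂ :=
  Matrix.vecMulVec v (star v)

/-- Choi vector `|U⟩⟩ = Σ_i e_i ⊗ U e_i`. -/
def choiVec {d : ℕ} (U : Matrix (Fin d) (Fin d) ℂ) : Fin d × Fin d → ℂ :=
  fun p => U p.2 p.1

/-- `|U⟩⟩⟨⟨U|`. -/
def choiProj {d : ℕ} (U : Matrix (Fin d) (Fin d) ℂ) :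
    Matrix (Fin d × Fin d) (Fin d × Fin d) ℂ :=
  outer (choiVec U)

/-- Partial trace over the first tensor factor. -/
def ptrLeft {α β : Type*} [Fintype α] (S : Matrix (α × β) (α × β) ℂ) :
    Matrix β β ℂ :=
  fun b b' => ∑ a, S (a, b) (a, b')

/-- Partial trace over the second (last) tensor factor. -/
def ptrRight {α β : Type*} [Fintype β] (S : Matrix (α × β) (α × β) ℂ) :
    Matrix α α ℂ :=
  fun a a' => ∑ b, S (a, b) (a', b)

/-- Action `S ⋆ U := Tr_{IO}[ S · (|U̅⟩⟩⟨⟨U̅|_{IO} ⊗ 1_F) ]` of a single-call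
supermap `S` on `I ⊗ O ⊗ F` applied to the unitary channel given by `U`. -/
def act {d dF : ℕ}
    (S : Matrix ((Fin d × Fin d) × Fin dF) ((Fin d × Fin d) × Fin dF) ℂ)
    (U : Matrix (Fin d) (Fin d) ℂ) : Matrix (Fin dF) (Fin dF) ℂ :=
  ptrLeft (S * (choiProj (mconj U) ⊗ₖ (1 : Matrix (Fin dF) (Fin dF) ℂ)))

/-- A single-call probabilistic protocol: `0 ≤ S ≤ S_ch` with
`Tr_F(S_ch) = σ ⊗ 1_d`, `σ ≥ 0`, `Tr σ = 1`. -/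
def IsProtocol {d dF : ℕ}
    (S Sch : Matrix ((Fin d × Fin d) × Fin dF) ((Fin d × Fin d) × Fin dF) ℂ) : Prop :=
  S.PosSemidef ∧ (Sch - S).PosSemidef ∧
    ∃ σ : Matrix (Fin d) (Fin d) ℂ, σ.PosSemidef ∧ σ.trace = 1 ∧
      ptrRight Sch = σ ⊗ₖ (1 : Matrix (Fin d) (Fin d) ℂ)

section helpers
variable {n : Type*} [Fintype n] [DecidableEq n]

lemma unitary_ext (v : n → n → ℂ) (s : Set n)
    (h : ∀ i ∈ s, ∀ j ∈ s, star (v i) ⬝ᵥ v j = if i = j then 1 else 0) :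
    ∃ V ∈ Matrix.unitaryGroup n ℂ, ∀ i ∈ s, ∀ k, V k i = v i k := by
  have hv : Orthonormal ℂ (s.domRestrict (fun i => (WithLp.toLp 2 (v i) : EuclideanSpace ℂ n))) := by
    rw [orthonormal_iff_ite]
    intro i j
    have := h i i.2 j j.2
    rw [Set.domRestrict_apply, Set.domRestrict_apply, EuclideanSpace.inner_toLp_toLp]
    rw [dotProduct_comm, this]
    simp [Subtype.ext_iff]
  obtain ⟨b, hb⟩ := hv.exists_orthonormalBasis_extension_of_card_eq (by simp)
  refine ⟨Matrix.of fun k i => b i k, ?_, fun i hi k => by simp [hb i hi]⟩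
  rw [Matrix.mem_unitaryGroup_iff']
  ext i j
  have := orthonormal_iff_ite.1 b.orthonormal i j
  rw [EuclideanSpace.inner_eq_star_dotProduct] at this
  rw [Matrix.one_apply, ← this, dotProduct_comm]
  simp [Matrix.mul_apply, dotProduct, Matrix.star_apply]

lemma unitary_of_special {E : Type*} [AddCommGroup E] [Module ℂ E] [Nonempty n]
    (L : Matrix n n ℂ →ₗ[ℂ] (n → ℂ) →ₗ[ℂ] E) (ψ : n → ℂ)
    (h : ∀ V ∈ Matrix.specialUnitaryGroup n ℂ, ∀ w, star w ⬝ᵥ V *ᵥ ψ = 0 → L V w = 0)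
    (V : Matrix n n ℂ) (hV : V ∈ Matrix.unitaryGroup n ℂ) (w : n → ℂ)
    (hw : star w ⬝ᵥ V *ᵥ ψ = 0) : L V w = 0 := by
  have hdet := Matrix.det_of_mem_unitary hV
  obtain ⟨z, hz⟩ := IsAlgClosed.exists_pow_nat_eq (star V.det) (Fintype.card_pos (α := n))
  have h1 : star z * z = 1 := by
    have h2 : ‖z‖ ^ (Fintype.card n) = 1 := by
      rw [← norm_pow, hz]
      simpa using CStarRing.norm_of_mem_unitary hdet
    have h3 : ‖z‖ = 1 := (pow_eq_one_iff_of_nonneg (norm_nonneg _) Fintype.card_ne_zero).1 h2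
    have := Complex.conj_mul' z
    simpa [h3] using this
  have hz0 : z ≠ 0 := by rintro rfl; simp at h1
  have := h (z • V) (by
    rw [Matrix.mem_specialUnitaryGroup_iff, Matrix.mem_unitaryGroup_iff'] at *
    refine ⟨?_, ?_⟩
    · rw [star_smul, Matrix.smul_mul, Matrix.mul_smul, smul_smul, h1, hV, one_smul]
    · rw [Matrix.det_smul, hz]
      exact (Unitary.mem_iff.1 hdet).1) w (by
    rw [Matrix.smul_mulVec, dotProduct_smul, hw, smul_zero])
  rw [map_smul, LinearMap.smul_apply] at this
  exact (smul_eq_zero.1 this).resolve_left hz0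

lemma core {E : Type*} [AddCommGroup E] [Module ℂ E] (hn : 2 < Fintype.card n) (o : n)
    (L : Matrix n n ℂ →ₗ[ℂ] (n → ℂ) →ₗ[ℂ] E)
    (h : ∀ V ∈ Matrix.unitaryGroup n ℂ, ∀ w, star w ⬝ᵥ (fun k => V k o) = 0 → L V w = 0) :
    L = 0 := by
  -- flip the sign of a column
  have B : ∀ V ∈ Matrix.unitaryGroup n ℂ, ∀ w, star w ⬝ᵥ (fun k => V k o) = 0 → ∀ j,
      L (vecMulVec (fun k => V k j) (Pi.single j 1)) w = 0 := by
    intro V hV w hw j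
    have hD : (Matrix.diagonal (fun i => if i = j then (-1 : ℂ) else 1)) ∈
        Matrix.unitaryGroup n ℂ := by
      rw [Matrix.mem_unitaryGroup_iff', Matrix.star_eq_conjTranspose,
        Matrix.diagonal_conjTranspose, Matrix.diagonal_mul_diagonal, ← Matrix.diagonal_one]
      congr 1
      ext i
      by_cases hi : i = j <;> simp [hi]
    have h2 := h _ (mul_mem hV hD) w (by
      simp only [Matrix.mul_diagonal]
      by_cases hi : o = j
      · simp only [hi, if_true, mul_neg, mul_one]
        rw [hi] at hw
        have := dotProduct_neg (star w) (fun k => V k j)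
        rw [hw, neg_zero] at this
        exact this
      · simpa [hi] using hw)
    have h1 := h V hV w hw
    have e : V = V * (Matrix.diagonal (fun i => if i = j then (-1 : ℂ) else 1)) +
        (2 : ℂ) • vecMulVec (fun k => V k j) (Pi.single j 1) := by
      ext a b
      by_cases hb : b = j
      · subst hb
        simp [Matrix.mul_diagonal, vecMulVec_apply]; ring
      · simp [Matrix.mul_diagonal, vecMulVec_apply, hb]
    rw [e, map_add, LinearMap.add_apply, h2, zero_add, map_smul, LinearMap.smul_apply] at h1
    exact (smul_eq_zero.1 h1).resolve_left two_ne_zero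
  have C : ∀ j, j ≠ o → ∀ a c,
      L (vecMulVec (Pi.single a 1) (Pi.single j 1)) (Pi.single c 1) = 0 := by
    intro j hj a c
    obtain ⟨b, hb⟩ : ∃ b, b ∉ ({a, c} : Finset n) := by
      by_contra! hcon
      have := Finset.card_le_two (a := a) (b := c)
      rw [Finset.eq_univ_iff_forall.2 hcon, Finset.card_univ] at this
      omega
    simp only [Finset.mem_insert, Finset.mem_singleton, not_or] at hb
    obtain ⟨V, hV, hVc⟩ := unitary_ext (fun i => if i = o then Pi.single b 1 else Pi.single a 1)
      {o, j} (by
        rintro i (rfl | rfl) k (rfl | rfl) <;>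
          simp [hj, hj.symm, hb.1, Ne.symm hb.1, Pi.single_apply, eq_comm])
    have h1 : (fun k => V k o) = Pi.single b 1 := by
      ext k; simp [hVc o (by simp)]
    have h2 : (fun k => V k j) = Pi.single a 1 := by
      ext k; simp [hVc j (by simp), hj]
    have := B V hV (Pi.single c 1) (by rw [h1]; simp [hb.2, Pi.single_apply, Ne.symm hb.2]) j
    rwa [h2] at this
  have D : ∀ u w : n → ℂ, star u ⬝ᵥ u = 1 → star w ⬝ᵥ u = 0 →
      L (vecMulVec u (Pi.single o 1)) w = 0 := by
    intro u w hu hw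
    obtain ⟨V, hV, hVc⟩ := unitary_ext (fun _ => u) {o} (by
        rintro i rfl k rfl; simpa using hu)
    have h1 : (fun k => V k o) = u := by
      ext k; simp [hVc o (by simp)]
    have := B V hV w (by rw [h1, hw]) o
    rwa [h1] at this
  have D' : ∀ a c, a ≠ c →
      L (vecMulVec (Pi.single a 1) (Pi.single o 1)) (Pi.single c 1) = 0 := by
    intro a c hac
    exact D _ _ (by simp) (by simp [Pi.single_apply, hac, hac.symm])
  have F : ∀ a b, a ≠ b → ∀ z : ℂ, star z * z = 1 →
      L (vecMulVec (Pi.single a 1) (Pi.single o 1)) (Pi.single a 1) =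
       (z * z) • L (vecMulVec (Pi.single b 1) (Pi.single o 1)) (Pi.single b 1) := by
    intro a b hab z hz
    have hz' : z * (starRingEnd ℂ) z = 1 := by rw [mul_comm]; exact hz
    have hs : ((Real.sqrt 2 : ℝ) : ℂ) * ((Real.sqrt 2 : ℝ) : ℂ) = 2 := by
      rw [← Complex.ofReal_mul, Real.mul_self_sqrt (by norm_num)]; simp
    have hs0 : ((Real.sqrt 2 : ℝ) : ℂ) ≠ 0 := by
      intro h0; rw [h0] at hs; norm_num at hs
    have := D ((((Real.sqrt 2 : ℝ) : ℂ))⁻¹ • (Pi.single a 1 + z • Pi.single b 1))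
      (Pi.single a 1 - z • Pi.single b 1) (by
        simp only [star_smul, star_add, smul_dotProduct, dotProduct_smul, add_dotProduct,
          dotProduct_add]
        simp [hab, hab.symm, Pi.single_apply, hz']
        field_simp
        rw [sq, hs, hz']; norm_num) (by
        simp only [star_smul, star_sub, smul_dotProduct, dotProduct_smul, sub_dotProduct,
          dotProduct_add]
        simp [hab, hab.symm, Pi.single_apply, hz'])
    rw [smul_vecMulVec, map_smul, LinearMap.smul_apply] at this
    have := (smul_eq_zero.1 this).resolve_left (inv_ne_zero hs0)
    rw [add_vecMulVec, smul_vecMulVec] at this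
    simp only [map_add, map_sub, map_smul, LinearMap.add_apply, LinearMap.smul_apply,
      D' a b hab, D' b a hab.symm, smul_zero, sub_zero, zero_sub, smul_neg, add_zero, zero_add,
      smul_smul] at this
    rwa [sub_eq_zero] at this
  have G : ∀ a, L (vecMulVec (Pi.single a 1) (Pi.single o 1)) (Pi.single a 1) = 0 := by
    intro a
    haveI : Nontrivial n := Fintype.one_lt_card_iff_nontrivial.1 (by omega)
    obtain ⟨b, hb⟩ := exists_ne a
    have h1 := F a b hb.symm 1 (by simp)
    have h2 := F a b hb.symm Complex.I (by simp)
    rw [mul_one, one_smul] at h1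
    rw [Complex.I_mul_I, ← h1, neg_one_smul] at h2
    have h3 : (2 : ℂ) • L (vecMulVec (Pi.single a 1) (Pi.single o 1)) (Pi.single a 1) = 0 := by
      rw [two_smul]; nth_rw 1 [h2]; simp
    exact (smul_eq_zero.1 h3).resolve_left two_ne_zero
  apply Matrix.ext_linearMap
  intro i j
  apply LinearMap.ext
  intro x
  have e : Matrix.single i j x = x • vecMulVec (Pi.single i 1) (Pi.single j 1) := by
    ext a b
    simp [Matrix.single_apply, vecMulVec_apply, Pi.single_apply]
    grind
  simp only [LinearMap.comp_apply, Matrix.singleLinearMap_apply, e, map_smul]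
  rw [LinearMap.zero_apply, smul_zero]
  convert smul_zero x
  apply LinearMap.pi_ext'
  intro c
  ext
  simp only [LinearMap.comp_apply, LinearMap.single_apply, LinearMap.zero_apply]
  by_cases hj : j = o
  · subst hj
    by_cases hc : i = c
    · subst hc; exact G i
    · exact D' i c hc
  · exact C j hj i c

lemma full {E : Type*} [AddCommGroup E] [Module ℂ E] (hn : 2 < Fintype.card n)
    (L : Matrix n n ℂ →ₗ[ℂ] (n → ℂ) →ₗ[ℂ] E) (ψ : n → ℂ) (hψ : star ψ ⬝ᵥ ψ = 1)
    (h : ∀ V ∈ Matrix.specialUnitaryGroup n ℂ, ∀ w, star w ⬝ᵥ V *ᵥ ψ = 0 → L V w = 0) :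
    L = 0 := by
  haveI : Nonempty n := Fintype.card_pos_iff.1 (by omega)
  let o : n := Classical.arbitrary n
  obtain ⟨W, hW, hWc⟩ := unitary_ext (fun _ => ψ) {o} (by
        rintro i rfl k rfl; simpa using hψ)
  have hWo : Wᴴ *ᵥ ψ = Pi.single o 1 := by
    have : ψ = W *ᵥ Pi.single o 1 := by
      ext k; simp [hWc o (by simp)]
    rw [this, Matrix.mulVec_mulVec, ← Matrix.star_eq_conjTranspose,
      Matrix.mem_unitaryGroup_iff'.1 hW, Matrix.one_mulVec]
  have key := core hn o (L ∘ₗ LinearMap.mulRight ℂ Wᴴ) (by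
    intro V hV w hw
    rw [LinearMap.comp_apply, LinearMap.mulRight_apply]
    apply unitary_of_special L ψ h _ (mul_mem hV (Unitary.star_mem hW))
    rw [← hw, ← Matrix.mulVec_mulVec, Matrix.star_eq_conjTranspose, hWo]
    congr 1
    ext k; simp)
  ext1 A
  have := LinearMap.congr_fun key (A * W)
  rw [LinearMap.comp_apply, LinearMap.mulRight_apply, Matrix.mul_assoc,
    ← Matrix.star_eq_conjTranspose, Matrix.mem_unitaryGroup_iff.1 hW, Matrix.mul_one] at this
  simpa using this

end helpers

lemma act_apply {d dF : ℕ}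
    (S : Matrix ((Fin d × Fin d) × Fin dF) ((Fin d × Fin d) × Fin dF) ℂ)
    (U : Matrix (Fin d) (Fin d) ℂ) (f g : Fin dF) :
    act S U f g = ∑ a, ∑ b, S (a, f) (b, g) * (mconj U b.2 b.1 * star (mconj U a.2 a.1)) := by
  unfold act ptrLeft
  refine Finset.sum_congr rfl fun a _ => ?_
  rw [Matrix.mul_apply, Fintype.sum_prod_type]
  refine Finset.sum_congr rfl fun b _ => ?_
  rw [Finset.sum_eq_single g]
  · simp [choiProj, outer, choiVec, vecMulVec_apply]
  · intro c _ hc; simp [hc]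
  · simp

def tens {d dF : ℕ} (A : Matrix (Fin d) (Fin d) ℂ) (w : Fin dF → ℂ) :
    (Fin d × Fin d) × Fin dF → ℂ := fun x => A x.1.2 x.1.1 * w x.2

lemma quad {d dF : ℕ}
    (S : Matrix ((Fin d × Fin d) × Fin dF) ((Fin d × Fin d) × Fin dF) ℂ)
    (U : Matrix (Fin d) (Fin d) ℂ) (w : Fin dF → ℂ) :
    star (tens (mconj U) w) ⬝ᵥ S *ᵥ (tens (mconj U) w) = star w ⬝ᵥ (act S U) *ᵥ w := by
  simp only [dotProduct, mulVec, tens, act_apply, Finset.mul_sum, Finset.sum_mul, Pi.star_apply,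
    Fintype.sum_prod_type (α₁ := Fin d × Fin d)]
  rw [Finset.sum_comm]
  refine Finset.sum_congr rfl fun f _ => ?_
  conv_rhs => rw [Finset.sum_comm]
  refine Finset.sum_congr rfl fun a _ => ?_
  rw [Finset.sum_comm]
  refine Finset.sum_congr rfl fun g _ => ?_
  refine Finset.sum_congr rfl fun b _ => ?_
  rw [star_mul]; ring

lemma mconj_mem {d : ℕ} {U : Matrix (Fin d) (Fin d) ℂ}
    (h : U ∈ Matrix.specialUnitaryGroup (Fin d) ℂ) :
    mconj U ∈ Matrix.specialUnitaryGroup (Fin d) ℂ := by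
  rw [Matrix.mem_specialUnitaryGroup_iff, Matrix.mem_unitaryGroup_iff] at *
  obtain ⟨h1, h2⟩ := h
  constructor
  · have := congrArg (fun M => M.map (starRingEnd ℂ)) h1
    simp only [Matrix.map_mul] at this
    rw [Matrix.map_one _ (by simp) (by simp)] at this
    rw [← this]
    rfl
  · have := (starRingEnd ℂ).map_det U
    rw [h2, map_one] at this
    exact this.symm

lemma mconj_mconj {d : ℕ} (U : Matrix (Fin d) (Fin d) ℂ) : mconj (mconj U) = U := by
  ext; simp [mconj]

lemma target_eq {d : ℕ} (U : Matrix (Fin d) (Fin d) ℂ) (ψ : Fin d → ℂ) :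
    mconj U * outer ψ * Uᵀ = outer (mconj U *ᵥ ψ) := by
  unfold outer
  rw [Matrix.mul_vecMulVec, Matrix.vecMulVec_mul, Matrix.star_mulVec]
  congr 2
  ext i j; simp [mconj]

theorem partA (d : ℕ) (ψ : Fin d → ℂ) (hψ : star ψ ⬝ᵥ ψ = 1) (hd : 2 < d)
    (S : Matrix ((Fin d × Fin d) × Fin d) ((Fin d × Fin d) × Fin d) ℂ) (p : ℝ)
    (hS : S.PosSemidef)
    (h : ∀ U : Matrix (Fin d) (Fin d) ℂ, U ∈ Matrix.specialUnitaryGroup (Fin d) ℂ →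
          act S U = (p : ℂ) • (mconj U * outer ψ * Uᵀ)) : p = 0 := by
  let L : Matrix (Fin d) (Fin d) ℂ →ₗ[ℂ] (Fin d → ℂ) →ₗ[ℂ] ((Fin d × Fin d) × Fin d → ℂ) :=
    LinearMap.mk₂ ℂ (fun A w => S *ᵥ (tens A w))
      (by intro A B w; rw [← Matrix.mulVec_add]; congr 1; ext x; simp [tens, add_mul])
      (by intro c A w; rw [← Matrix.mulVec_smul]; congr 1; ext x; simp [tens, mul_assoc])
      (by intro A w v; rw [← Matrix.mulVec_add]; congr 1; ext x; simp [tens, mul_add])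
      (by intro c A w; rw [← Matrix.mulVec_smul]; congr 1; ext x; simp [tens]; ring)
  have hL : L = 0 := by
    apply full (by simpa using hd) L ψ hψ
    intro V hV w hw
    change S *ᵥ (tens V w) = 0
    rw [← hS.dotProduct_mulVec_zero_iff]
    have := quad S (mconj V) w
    rw [mconj_mconj] at this
    rw [this, h _ (mconj_mem hV), target_eq, mconj_mconj, Matrix.smul_mulVec, outer,
      Matrix.vecMulVec_mulVec, dotProduct_smul, dotProduct_smul, hw]
    simp
  have hq := quad S 1 ψ
  have h0 : S *ᵥ (tens (mconj 1) ψ) = 0 := by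
    change L _ _ = 0
    rw [hL]; rfl
  rw [h0, h 1 (one_mem _), target_eq, Matrix.smul_mulVec, outer] at hq
  have h1 : mconj (1 : Matrix (Fin d) (Fin d) ℂ) = 1 := by
    unfold mconj; exact Matrix.map_one _ (by simp) (by simp)
  rw [h1, Matrix.one_mulVec, Matrix.vecMulVec_mulVec, dotProduct_smul, dotProduct_smul, hψ] at hq
  simpa using hq.symm

theorem partC (d : ℕ) (ψ : Fin d → ℂ) (hψ : star ψ ⬝ᵥ ψ = 1)
    (S Sch : Matrix ((Fin d × Fin d) × Fin d) ((Fin d × Fin d) × Fin d) ℂ) (p : ℝ)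
    (hP : IsProtocol S Sch)
    (h : ∀ U : Matrix (Fin d) (Fin d) ℂ, U ∈ Matrix.specialUnitaryGroup (Fin d) ℂ →
          act S U = (p : ℂ) • (mconj U * outer ψ * Uᵀ)) : p ≤ 1 := by
  obtain ⟨-, hD, σ, -, hσ, hR⟩ := hP
  have h1 : mconj (1 : Matrix (Fin d) (Fin d) ℂ) = 1 := by
    unfold mconj; exact Matrix.map_one _ (by simp) (by simp)
  have e1 : (act S 1).trace = p := by
    rw [h 1 (one_mem _), target_eq, h1, Matrix.one_mulVec, Matrix.trace_smul, outer,
      Matrix.trace_vecMulVec, dotProduct_comm, hψ]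
    simp
  have e2 : (act Sch 1).trace = 1 := by
    rw [← hσ]
    simp only [Matrix.trace, Matrix.diag_apply, act_apply, h1]
    rw [Finset.sum_comm]
    have : ∀ a b : Fin d × Fin d, ∑ f, Sch (a, f) (b, f) = σ a.1 b.1 * if a.2 = b.2 then 1 else 0 := by
      intro a b
      have := congrFun (congrFun hR a) b
      simpa [ptrRight, Matrix.one_apply] using this
    calc _ = ∑ a : Fin d × Fin d, ∑ b : Fin d × Fin d, (σ a.1 b.1 * if a.2 = b.2 then 1 else 0) *
          ((1 : Matrix (Fin d) (Fin d) ℂ) b.2 b.1 * star ((1 : Matrix (Fin d) (Fin d) ℂ) a.2 a.1)) := by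
          refine Finset.sum_congr rfl fun a _ => ?_
          rw [Finset.sum_comm]
          refine Finset.sum_congr rfl fun b _ => ?_
          rw [← this, Finset.sum_mul]
      _ = _ := by
          simp [Fintype.sum_prod_type, Matrix.one_apply, apply_ite]
  have e3 : 0 ≤ (act (Sch - S) 1).trace := by
    apply Finset.sum_nonneg
    intro f _
    have := hD.dotProduct_mulVec_nonneg (tens (mconj 1) (Pi.single f 1))
    rw [quad] at this
    simpa using this
  have e4 : act (Sch - S) 1 = act Sch 1 - act S 1 := by
    ext f g
    simp [act_apply, sub_mul, Finset.sum_sub_distrib]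
  rw [e4, Matrix.trace_sub, e1, e2] at e3
  have : (0 : ℂ) ≤ ((1 - p : ℝ) : ℂ) := by simpa using e3
  have := Complex.zero_le_real.1 this
  linarith

theorem partB (ψ : Fin 2 → ℂ) (hψ : star ψ ⬝ᵥ ψ = 1) :
    ∃ S Sch : Matrix ((Fin 2 × Fin 2) × Fin 2) ((Fin 2 × Fin 2) × Fin 2) ℂ,
        IsProtocol S Sch ∧
        ∀ U : Matrix (Fin 2) (Fin 2) ℂ, U ∈ Matrix.specialUnitaryGroup (Fin 2) ℂ →
          act S U = ((1 : ℝ) : ℂ) • (mconj U * outer ψ * Uᵀ) := by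
  let Y : Matrix (Fin 2) (Fin 2) ℂ := !![0, 1; -1, 0]
  let φ : Fin 2 → ℂ := ![-ψ 1, ψ 0]
  let s : (Fin 2 × Fin 2) × Fin 2 → ℂ := fun x => Y x.2 x.1.2 * φ x.1.1
  refine ⟨outer s, outer s, ⟨Matrix.posSemidef_vecMulVec_self_star s, by
    rw [sub_self]; exact Matrix.PosSemidef.zero, outer φ,
    Matrix.posSemidef_vecMulVec_self_star φ, ?_, ?_⟩, ?_⟩
  · rw [outer, Matrix.trace_vecMulVec, ← hψ]
    simp [dotProduct, Fin.sum_univ_two, φ]; ring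
  · ext ⟨i, o⟩ ⟨i', o'⟩
    simp only [ptrRight, outer, vecMulVec_apply, s, Matrix.kroneckerMap_apply, Fin.sum_univ_two,
      Pi.star_apply]
    fin_cases o <;> fin_cases o' <;> simp [Y]
  · intro U hU
    rw [target_eq]
    have hadj : star U = adjugate U := by
      obtain ⟨hu, hdet⟩ := Matrix.mem_specialUnitaryGroup_iff.1 hU
      have h1 := Matrix.mem_unitaryGroup_iff'.1 hu
      calc star U = star U * (U * adjugate U) := by rw [Matrix.mul_adjugate, hdet]; simp
        _ = adjugate U := by rw [← Matrix.mul_assoc, h1, Matrix.one_mul]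
    have hvec : ∀ f, ∑ a : Fin 2 × Fin 2, s (a, f) * star (mconj U a.2 a.1) = (mconj U *ᵥ ψ) f := by
      rw [Matrix.adjugate_fin_two] at hadj
      have h00 := congrFun (congrFun hadj 0) 0
      have h01 := congrFun (congrFun hadj 0) 1
      have h10 := congrFun (congrFun hadj 1) 0
      have h11 := congrFun (congrFun hadj 1) 1
      simp [Matrix.star_apply] at h00 h01 h10 h11
      intro f
      fin_cases f <;>
        simp [Fintype.sum_prod_type, Fin.sum_univ_two, s, Y, φ, mconj, mulVec, dotProduct,
          h00, h01, h10, h11] <;> ring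
    ext f g
    rw [act_apply]
    simp only [Complex.ofReal_one, one_smul, outer, vecMulVec_apply, Pi.star_apply, ← hvec,
      star_sum, Finset.sum_mul_sum]
    refine Finset.sum_congr rfl fun a _ => Finset.sum_congr rfl fun b _ => ?_
    rw [star_mul (s (b, g)), star_star]; ring

/-- **Probabilistic exact unitary complex conjugation on a known pure state, single
call.** For `d > 2` every protocol implementing `U ↦ p · U̅|ψ⟩⟨ψ|Uᵀ` for all
`U ∈ SU(d)` has `p = 0`; for `d = 2` the maximal success probability is `1`. -/
theorem conjugation_single_call_known_pure_state
    (d : ℕ) (hd : 2 ≤ d) (ψ : Fin d → ℂ) (hψ : star ψ ⬝ᵥ ψ = 1) :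
    (2 < d →
      ∀ (S Sch : Matrix ((Fin d × Fin d) × Fin d) ((Fin d × Fin d) × Fin d) ℂ) (p : ℝ),
        IsProtocol S Sch →
        (∀ U : Matrix (Fin d) (Fin d) ℂ, U ∈ Matrix.specialUnitaryGroup (Fin d) ℂ →
          act S U = (p : ℂ) • (mconj U * outer ψ * Uᵀ)) →
        p = 0) ∧
    (d = 2 →
      (∃ S Sch : Matrix ((Fin d × Fin d) × Fin d) ((Fin d × Fin d) × Fin d) ℂ,
        IsProtocol S Sch ∧
        ∀ U : Matrix (Fin d) (Fin d) ℂ, U ∈ Matrix.specialUnitaryGroup (Fin d) ℂ →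
          act S U = ((1 : ℝ) : ℂ) • (mconj U * outer ψ * Uᵀ)) ∧
      (∀ (S Sch : Matrix ((Fin d × Fin d) × Fin d) ((Fin d × Fin d) × Fin d) ℂ) (p : ℝ),
        IsProtocol S Sch →
        (∀ U : Matrix (Fin d) (Fin d) ℂ, U ∈ Matrix.specialUnitaryGroup (Fin d) ℂ →
          act S U = (p : ℂ) • (mconj U * outer ψ * Uᵀ)) →
        p ≤ 1)) := by
  refine ⟨fun h S Sch p hP hact => partA d ψ hψ h S p hP.1 hact, ?_⟩
  rintro rfl
  exact ⟨partB ψ hψ, fun S Sch p hP hact => partC 2 ψ hψ S Sch p hP hact⟩
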